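/- Let f : ℝ^d → ℝ be a constant function, and let f̃ : ℝ^d → ℝ be differentiable with |f(x) - f̃(x)| ≤ ε for all x. If v ∈ ℝ^d satisfies ‖v - ∇f̃(x)‖ ≤ ε for all x ∈ ℝ^d, then ‖v‖ ≤ ε. -/

import Mathlib

/-!
If the derivative of `f` stays within `δ` of a fixed continuous linear map `L` (here `⟪v, ·⟫`), then
by the mean value inequality `f - L` grows at most like `δ * ‖x‖`. If `f` is moreover bounded, then
`‖L x‖ ≤ δ * ‖x‖ + C`, and replacing `x` by large multiples of itself removes the constant `C`.
-/

open Bornology Metric Set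

section

variable {𝕜 E F : Type*}

theorem opNorm_le_of_norm_apply_le_mul_norm_add [NontriviallyNormedField 𝕜]
    [SeminormedAddCommGroup E] [NormedSpace 𝕜 E] [SeminormedAddCommGroup F] [NormedSpace 𝕜 F]
    {L : E →L[𝕜] F} {δ C : ℝ} (hδ : 0 ≤ δ) (hL : ∀ x, ‖L x‖ ≤ δ * ‖x‖ + C) : ‖L‖ ≤ δ := by
  refine L.opNorm_le_bound hδ fun x ↦ ?_
  by_contra! hx
  have hgap : 0 < ‖L x‖ - δ * ‖x‖ := sub_pos.2 hx
  obtain ⟨a, ha⟩ := NormedField.exists_lt_norm 𝕜 (C / (‖L x‖ - δ * ‖x‖))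
  have hlarge : C < ‖a‖ * (‖L x‖ - δ * ‖x‖) := (div_lt_iff₀ hgap).1 ha
  have hscaled : ‖a‖ * ‖L x‖ ≤ δ * (‖a‖ * ‖x‖) + C := by
    simpa only [map_smul, norm_smul] using hL (a • x)
  linarith

variable [RCLike 𝕜] [NormedAddCommGroup E]

theorem opNorm_le_of_norm_sub_fderiv_le_of_isBounded_range [NormedSpace 𝕜 E]
    [NormedAddCommGroup F] [NormedSpace 𝕜 F] {f : E → F} {f' : E → E →L[𝕜] F} {L : E →L[𝕜] F}
    {δ : ℝ} (hbdd : IsBounded (range f)) (hf : ∀ x, HasFDerivAt f (f' x) x)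
    (hL : ∀ x, ‖L - f' x‖ ≤ δ) : ‖L‖ ≤ δ := by
  let : NormedSpace ℝ E := .restrictScalars ℝ 𝕜 E
  obtain ⟨C, hC⟩ := isBounded_range_iff.1 hbdd
  refine opNorm_le_of_norm_apply_le_mul_norm_add (C := C) ((norm_nonneg _).trans (hL 0)) fun x ↦ ?_
  have hmean : ‖f x - f 0 - L x‖ ≤ δ * ‖x‖ := by
    simpa only [sub_zero] using convex_univ.norm_image_sub_le_of_norm_hasFDerivWithin_le'
      (fun y _ ↦ (hf y).hasFDerivWithinAt) (fun y _ ↦ norm_sub_rev L (f' y) ▸ hL y)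
      (mem_univ 0) (mem_univ x)
  have hosc : ‖f x - f 0‖ ≤ C := by simpa only [dist_eq_norm] using hC x 0
  calc
    ‖L x‖ ≤ ‖f x - f 0‖ + ‖f x - f 0 - L x‖ := norm_le_norm_add_norm_sub _ _
    _ ≤ C + δ * ‖x‖ := add_le_add hosc hmean
    _ = δ * ‖x‖ + C := add_comm _ _

theorem stmt_2_general [InnerProductSpace 𝕜 E] [CompleteSpace E] {f : E → 𝕜} {g : E → E} {v : E}
    {δ : ℝ} (hbdd : IsBounded (range f)) (hgrad : ∀ x, HasGradientAt f (g x) x)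
    (hv : ∀ x, ‖v - g x‖ ≤ δ) : ‖v‖ ≤ δ := by
  have hdual : ∀ x, ‖InnerProductSpace.toDual 𝕜 E v - InnerProductSpace.toDual 𝕜 E (g x)‖ ≤ δ :=
    fun x ↦ by simpa only [← map_sub, LinearIsometryEquiv.norm_map] using hv x
  simpa only [LinearIsometryEquiv.norm_map] using
    opNorm_le_of_norm_sub_fderiv_le_of_isBounded_range hbdd
      (fun x ↦ (hgrad x).hasFDerivAt) hdual

end

/-- If `f` is constant, `f̃` is differentiable with `‖f - f̃‖_∞ ≤ ε`, and the vector `v`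
satisfies `‖v - ∇f̃(x)‖ ≤ ε` for all `x`, then `‖v‖ ≤ ε`. -/
theorem stmt_2 (d : ℕ) (ε : ℝ) (hε : 0 < ε)
    (f ftilde : EuclideanSpace ℝ (Fin d) → ℝ) (c : ℝ)
    (hf : ∀ x, f x = c)
    (g : EuclideanSpace ℝ (Fin d) → EuclideanSpace ℝ (Fin d))
    (hgrad : ∀ x, HasGradientAt ftilde (g x) x)
    (happrox : ∀ x, |f x - ftilde x| ≤ ε)
    (v : EuclideanSpace ℝ (Fin d))
    (hv : ∀ x, ‖v - g x‖ ≤ ε) :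
    ‖v‖ ≤ ε :=
  stmt_2_general (isBounded_closedBall.subset <| range_subset_iff.2 fun x ↦
    mem_closedBall'.2 (hf x ▸ happrox x)) hgrad hv
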